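/- Let X be a nonempty complete metric space that is uniformly ε-chainable on balls for every ε > 0 and such that K(X) with the Hausdorff metric is ε-chainable for every ε > 0, let Λ be a compact metric space, let w : Λ × X → X be a weakly* hyperbolic IFS with global attractor K, and let p be a Borel probability measure on Λ. Then there exists a unique Borel probability measure ν on X with T_p(ν) = ν and supp(ν) ⊆ K; if moreover p(U) > 0 for every nonempty open U ⊆ Λ then supp(ν) = K. Furthermore, for every Borel probability measure μ on X with compact support, sup{ |∫_X f dT_pⁿ(μ) − ∫_X f dν| : f : X → ℝ, |f(x) − f(y)| ≤ d(x,y) for all x,y } → 0 as n → ∞. -/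

import Mathlib

open Metric Set Filter Topology MeasureTheory TopologicalSpace

/-- `seqComp w σ n = w_{σ₁} ∘ ⋯ ∘ w_{σₙ}` (with `σ i` denoting `σ_{i+1}`). -/
def seqComp {Λ X : Type*} (w : Λ → X → X) (σ : ℕ → Λ) : ℕ → X → X
  | 0 => id
  | n + 1 => seqComp w σ n ∘ w (σ n)

/-- The Hutchinson–Barnsley operator on sets: `F(A) = w(Λ × A)`. -/
def HBset {Λ X : Type*} (w : Λ → X → X) (A : Set X) : Set X :=
  (fun p : Λ × X => w p.1 p.2) '' (Set.univ ×ˢ A)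

/-- The (topological) support of a measure: the set of points all of whose
neighbourhoods have positive measure. -/
def measSupport {X : Type*} [TopologicalSpace X] [MeasurableSpace X]
    (μ : MeasureTheory.Measure X) : Set X :=
  {x : X | ∀ U : Set X, IsOpen U → x ∈ U → 0 < μ U}

/-!
Along every address `σ` the maps `w_{σ₁} ∘ ⋯ ∘ w_{σₙ}` contract bounded sets uniformly in `σ`: an
`η`-chain of bounded length is contracted link by link. Their limits are therefore points `π σ`,
and the coding map `π` is continuous, has image `K` and satisfies `π σ = w_{σ₁} (π (σ₂, σ₃, …))`.
The invariant measure is the image under `π` of the product measure `P = p^ℕ`. Indeed `Tⁿ μ` is the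
image of `P × μ` under `(σ, x) ↦ w_{σ₁…σₙ} x`, which tends to `π σ` uniformly for `x` in a bounded
set. So `Tⁿ μ` and the image of `P` under `π` are close as images of one and the same measure under
two uniformly close maps.
-/

section Compositions

variable {Λ X : Type*} {w : Λ → X → X} {K : Set X}

lemma seqComp_add (w : Λ → X → X) (σ : ℕ → Λ) (m n : ℕ) (x : X) :
    seqComp w σ (m + n) x = seqComp w σ m (seqComp w (fun k => σ (m + k)) n x) := by
  induction n generalizing x with
  | zero => rfl
  | succ n ih => exact ih (w (σ (m + n)) x)

lemma seqComp_succ' (w : Λ → X → X) (σ : ℕ → Λ) (n : ℕ) (x : X) :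
    seqComp w σ (n + 1) x = w (σ 0) (seqComp w (fun k => σ (k + 1)) n x) := by
  rw [add_comm n, seqComp_add]
  simp only [add_comm 1]
  rfl

lemma continuous_seqComp [TopologicalSpace Λ] [TopologicalSpace X]
    (hw : Continuous fun p : Λ × X => w p.1 p.2) (n : ℕ) :
    Continuous fun q : (ℕ → Λ) × X => seqComp w q.1 n q.2 := by
  induction n with
  | zero => exact continuous_snd
  | succ n ih =>
    have hstep : Continuous fun q : (ℕ → Λ) × X => w (q.1 n) q.2 :=
      hw.comp (f := fun q : (ℕ → Λ) × X => (q.1 n, q.2)) (by fun_prop)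
    exact ih.comp (continuous_fst.prodMk hstep)

lemma measurable_seqComp [MeasurableSpace Λ] [MeasurableSpace X]
    (hw : Measurable fun p : Λ × X => w p.1 p.2) (n : ℕ) :
    Measurable fun q : (ℕ → Λ) × X => seqComp w q.1 n q.2 := by
  induction n with
  | zero => exact measurable_snd
  | succ n ih =>
    have hstep : Measurable fun q : (ℕ → Λ) × X => w (q.1 n) q.2 :=
      hw.comp (f := fun q : (ℕ → Λ) × X => (q.1 n, q.2)) (by fun_prop)
    exact ih.comp (measurable_fst.prodMk hstep)

lemma mapsTo_of_HBset_subset (hK : HBset w K ⊆ K) (l : Λ) : MapsTo (w l) K K :=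
  fun x hx => hK ⟨(l, x), ⟨mem_univ l, hx⟩, rfl⟩

lemma mapsTo_seqComp (hK : ∀ l, MapsTo (w l) K K) (σ : ℕ → Λ) (n : ℕ) :
    MapsTo (seqComp w σ n) K K := by
  induction n with
  | zero => exact mapsTo_id K
  | succ n ih => exact ih.comp (hK (σ n))

lemma exists_forall_mem_image_seqComp (hK : K ⊆ HBset w K) {x : X} (hx : x ∈ K) :
    ∃ σ : ℕ → Λ, ∀ n, x ∈ seqComp w σ n '' K := by
  have hpre : ∀ y : K, ∃ (l : Λ) (z : K), w l z = y := by
    rintro ⟨y, hy⟩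
    obtain ⟨⟨l, z⟩, ⟨-, hz⟩, hlz⟩ := hK hy
    exact ⟨l, ⟨z, hz⟩, hlz⟩
  choose symbol pre hpre using hpre
  let orbit : ℕ → K := fun n => pre^[n] ⟨x, hx⟩
  refine ⟨fun n => symbol (orbit n), fun n => ⟨orbit n, (orbit n).2, ?_⟩⟩
  induction n with
  | zero => rfl
  | succ n ih =>
    have horbit : orbit (n + 1) = pre (orbit n) := Function.iterate_succ_apply' _ _ _
    rwa [seqComp, Function.comp_apply, horbit, hpre]

end Compositions

section Contraction

variable {Λ X : Type*} [PseudoMetricSpace X] {w : Λ → X → X}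

variable (X) in
/-- Uniform `ε`-chainability on balls. -/
def UniformlyChainableOnBalls (ε : ℝ) : Prop :=
  ∀ (a : X) (r : ℝ), ∃ k : ℕ, ∀ x ∈ ball a r, ∀ y ∈ ball a r, ∃ n ≤ k, ∃ c : ℕ → X,
    c 0 = x ∧ c n = y ∧ ∀ i < n, dist (c i) (c (i + 1)) < ε

/-- The maps `w_{σ₁} ∘ ⋯ ∘ w_{σₙ}` contract pairs of points at distance less than `η`, uniformly in
the address `σ`; weak* hyperbolicity is this property for some `η > 0`. -/
def ContractsAtScale (w : Λ → X → X) (η : ℝ) : Prop :=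
  ∀ ε > (0 : ℝ), ∃ n₀ : ℕ, ∀ n ≥ n₀, ∀ σ : ℕ → Λ, ∀ x y : X,
    dist x y < η → dist (seqComp w σ n x) (seqComp w σ n y) < ε

/-- The diameter of the image of a bounded set under `w_{σ₁} ∘ ⋯ ∘ w_{σₙ}` tends to zero, uniformly
in the address `σ`. -/
def ContractsBoundedSets (w : Λ → X → X) : Prop :=
  ∀ C : Set X, Bornology.IsBounded C → ∀ ε > (0 : ℝ), ∃ n₀ : ℕ, ∀ n ≥ n₀, ∀ σ : ℕ → Λ,
    ∀ x ∈ C, ∀ y ∈ C, dist (seqComp w σ n x) (seqComp w σ n y) < ε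

lemma ContractsAtScale.contractsBoundedSets {η : ℝ} (hw : ContractsAtScale w η)
    (hX : UniformlyChainableOnBalls X η) : ContractsBoundedSets w := by
  intro C hC ε hε
  obtain rfl | ⟨a, -⟩ := C.eq_empty_or_nonempty
  · simp
  obtain ⟨r, hr⟩ := hC.subset_ball a
  obtain ⟨k, hk⟩ := hX a r
  obtain ⟨n₀, hn₀⟩ := hw (ε / (k + 1)) (by positivity)
  refine ⟨n₀, fun n hn σ x hx y hy => ?_⟩
  obtain ⟨m, hm, c, rfl, rfl, hc⟩ := hk x (hr hx) y (hr hy)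
  calc dist (seqComp w σ n (c 0)) (seqComp w σ n (c m))
      ≤ ∑ _i ∈ Finset.range m, ε / (k + 1) :=
        dist_le_range_sum_of_dist_le (f := fun i => seqComp w σ n (c i)) m
          fun hi => (hn₀ n hn σ _ _ (hc _ hi)).le
    _ = m * (ε / (k + 1)) := by simp
    _ ≤ k * (ε / (k + 1)) := by gcongr
    _ < (k + 1) * (ε / (k + 1)) := by gcongr; exact lt_add_one _
    _ = ε := by field_simp

end Contraction

section CodingMap

variable {Λ X : Type*} [MetricSpace X] {w : Λ → X → X} {π : (ℕ → Λ) → X} {K : Set X}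

/-- `π` is the coding map of `w`: `w_{σ₁…σₙ} x` tends to `π σ`, uniformly in `σ` and in `x` ranging
over a bounded set. -/
def IsCodingMap (w : Λ → X → X) (π : (ℕ → Λ) → X) : Prop :=
  ∀ C : Set X, Bornology.IsBounded C → ∀ ε > (0 : ℝ), ∃ n₀ : ℕ, ∀ n ≥ n₀, ∀ σ : ℕ → Λ,
    ∀ x ∈ C, dist (seqComp w σ n x) (π σ) < ε

lemma ContractsBoundedSets.cauchySeq_seqComp (hw : ContractsBoundedSets w)
    (hKb : Bornology.IsBounded K) (hK : ∀ l, MapsTo (w l) K K) (σ : ℕ → Λ) {a : X} (ha : a ∈ K) :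
    CauchySeq fun n => seqComp w σ n a := by
  refine Metric.cauchySeq_iff'.2 fun ε hε => ?_
  obtain ⟨N, hN⟩ := hw K hKb ε hε
  refine ⟨N, fun n hn => ?_⟩
  obtain ⟨k, rfl⟩ := Nat.exists_eq_add_of_le hn
  rw [seqComp_add]
  exact hN N le_rfl σ _ (mapsTo_seqComp hK _ k ha) a ha

lemma ContractsBoundedSets.exists_isCodingMap (hw : ContractsBoundedSets w)
    (hKne : K.Nonempty) (hKb : Bornology.IsBounded K) (hKc : IsComplete K)
    (hK : ∀ l, MapsTo (w l) K K) : ∃ π, IsCodingMap w π := by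
  obtain ⟨a, ha⟩ := hKne
  choose π _ hπ using fun σ => cauchySeq_tendsto_of_isComplete hKc
    (fun n => mapsTo_seqComp hK σ n ha) (hw.cauchySeq_seqComp hKb hK σ ha)
  refine ⟨π, fun C hC ε hε => ?_⟩
  obtain ⟨N, hN⟩ := hw (K ∪ C) (hKb.union hC) (ε / 2) (half_pos hε)
  refine ⟨N, fun n hn σ x hx => lt_of_le_of_lt ?_ (half_lt_self hε)⟩
  refine le_of_tendsto (tendsto_const_nhds.dist (hπ σ)) ?_
  filter_upwards [eventually_ge_atTop n] with m hm
  obtain ⟨k, rfl⟩ := Nat.exists_eq_add_of_le hm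
  rw [seqComp_add]
  exact (hN n hn σ x (Or.inr hx) _ (Or.inl (mapsTo_seqComp hK _ k ha))).le

namespace IsCodingMap

lemma tendsto_seqComp (hπ : IsCodingMap w π) (σ : ℕ → Λ) (x : X) :
    Tendsto (fun n => seqComp w σ n x) atTop (𝓝 (π σ)) := by
  refine Metric.tendsto_atTop.2 fun ε hε => ?_
  obtain ⟨N, hN⟩ := hπ {x} Bornology.isBounded_singleton ε hε
  exact ⟨N, fun n hn => hN n hn σ x rfl⟩

protected lemma continuous [TopologicalSpace Λ] [Nonempty X] (hπ : IsCodingMap w π)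
    (hw : Continuous fun p : Λ × X => w p.1 p.2) : Continuous π := by
  inhabit X
  have hlim : TendstoUniformly (fun n σ => seqComp w σ n default) π atTop := by
    refine Metric.tendstoUniformly_iff.2 fun ε hε => eventually_atTop.2 ?_
    obtain ⟨N, hN⟩ := hπ {default} Bornology.isBounded_singleton ε hε
    exact ⟨N, fun n hn σ => dist_comm (π σ) _ ▸ hN n hn σ default rfl⟩
  exact hlim.continuous <| Frequently.of_forall fun n =>
    (continuous_seqComp hw n).comp (.prodMk_left default)

lemma eq_apply_shift [Nonempty X] (hπ : IsCodingMap w π) (hw : ∀ l, Continuous (w l))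
    (σ : ℕ → Λ) : π σ = w (σ 0) (π fun k => σ (k + 1)) := by
  inhabit X
  refine tendsto_nhds_unique ((hπ.tendsto_seqComp σ default).comp (tendsto_add_atTop_nat 1)) ?_
  simp only [Function.comp_def, seqComp_succ']
  exact ((hw (σ 0)).tendsto _).comp (hπ.tendsto_seqComp _ default)

lemma range_eq (hπ : IsCodingMap w π) (hKne : K.Nonempty) (hKb : Bornology.IsBounded K)
    (hKc : IsClosed K) (hK : HBset w K = K) : range π = K := by
  refine Subset.antisymm (range_subset_iff.2 fun σ => ?_) fun x hx => ?_
  · obtain ⟨a, ha⟩ := hKne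
    exact hKc.mem_of_tendsto (hπ.tendsto_seqComp σ a) <| Eventually.of_forall fun n =>
      mapsTo_seqComp (mapsTo_of_HBset_subset hK.subset) σ n ha
  · obtain ⟨σ, hσ⟩ := exists_forall_mem_image_seqComp hK.superset hx
    refine ⟨σ, eq_of_forall_dist_le fun ε hε => ?_⟩
    obtain ⟨N, hN⟩ := hπ K hKb ε hε
    obtain ⟨y, hy, rfl⟩ := hσ N
    exact (dist_comm (π σ) _).trans_le (hN N le_rfl σ y hy).le

end IsCodingMap

end CodingMap

section Measures

lemma measSupport_eq_support {X : Type*} [TopologicalSpace X] [MeasurableSpace X]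
    (μ : Measure X) : measSupport μ = μ.support := by
  simp only [Measure.support_eq_forall_isOpen, measSupport, imp.swap]

lemma range_subset_support_map {Ω X : Type*} [TopologicalSpace Ω] [MeasurableSpace Ω]
    [OpensMeasurableSpace Ω] [TopologicalSpace X] [MeasurableSpace X] [BorelSpace X]
    {μ : Measure Ω} [μ.IsOpenPosMeasure] {f : Ω → X} (hf : Continuous f) :
    range f ⊆ (μ.map f).support := by
  rintro _ ⟨ω, rfl⟩
  rw [Measure.mem_support_iff_forall]
  intro U hU
  obtain ⟨V, hVU, hV, hωV⟩ := mem_nhds_iff.1 hU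
  calc 0 < μ (f ⁻¹' V) := (hV.preimage hf).measure_pos μ ⟨ω, hωV⟩
    _ = μ.map f V := (Measure.map_apply hf.measurable hV.measurableSet).symm
    _ ≤ μ.map f U := measure_mono hVU

lemma isOpenPosMeasure_infinitePi {ι : Type*} {Ω : ι → Type*} [∀ i, TopologicalSpace (Ω i)]
    [∀ i, MeasurableSpace (Ω i)] [∀ i, OpensMeasurableSpace (Ω i)] (μ : ∀ i, Measure (Ω i))
    [∀ i, IsProbabilityMeasure (μ i)] [∀ i, (μ i).IsOpenPosMeasure] :
    (Measure.infinitePi μ).IsOpenPosMeasure := by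
  refine ⟨fun U hU ⟨ω, hω⟩ => ?_⟩
  obtain ⟨I, u, hu, hIU⟩ := isOpen_pi_iff.1 hU ω hω
  refine ne_of_gt (lt_of_lt_of_le (pos_iff_ne_zero.2 ?_) (measure_mono hIU))
  rw [Measure.infinitePi_pi _ fun i hi => (hu i hi).1.measurableSet]
  exact Finset.prod_ne_zero_iff.2 fun i hi => (hu i hi).1.measure_ne_zero _ ⟨ω i, (hu i hi).2⟩

lemma indepFun_head_tail_infinitePi {Ω : ℕ → Type*} [∀ n, MeasurableSpace (Ω n)]
    (μ : ∀ n, Measure (Ω n)) [∀ n, IsProbabilityMeasure (μ n)] :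
    ProbabilityTheory.IndepFun (fun ω : ∀ n, Ω n => ω 0) (fun ω n => ω (n + 1))
      (Measure.infinitePi μ) := by
  have hindep := ProbabilityTheory.iIndepFun_infinitePi (P := μ) fun _ => measurable_id
  refine ProbabilityTheory.IndepFun.indepFun_process (by fun_prop) (by fun_prop) fun I => ?_
  have hdisj : Disjoint {0} (I.map (addRightEmbedding 1)) := by simp
  have hhead : Measurable fun ω : ∀ n : ({0} : Finset ℕ), Ω n =>
      ω ⟨0, Finset.mem_singleton_self 0⟩ := by fun_prop
  have htail : Measurable fun (ω : ∀ n : I.map (addRightEmbedding 1), Ω n) (i : I) =>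
      ω ⟨i + 1, Finset.mem_map_of_mem _ i.2⟩ := by fun_prop
  exact (hindep.indepFun_finset _ _ hdisj fun n => measurable_pi_apply n).comp hhead htail

lemma measurePreserving_head_tail_infinitePi {Ω : ℕ → Type*} [∀ n, MeasurableSpace (Ω n)]
    (μ : ∀ n, Measure (Ω n)) [∀ n, IsProbabilityMeasure (μ n)] :
    MeasurePreserving (fun ω : ∀ n, Ω n => (ω 0, fun n => ω (n + 1))) (Measure.infinitePi μ)
      ((μ 0).prod (Measure.infinitePi fun n => μ (n + 1))) where
  measurable := by fun_prop
  map_eq := by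
    rw [(indepFun_head_tail_infinitePi μ).map_prod_eq_prod_map_map
        (measurable_pi_apply 0).aemeasurable (Measurable.aemeasurable (by fun_prop)),
      Measure.infinitePi_map_eval,
      Measure.map_infinitePi_infinitePi_of_inj (add_left_injective 1)]

lemma abs_integral_map_sub_integral_map_le {Ω X : Type*} [MeasurableSpace Ω]
    [PseudoMetricSpace X] [MeasurableSpace X] [OpensMeasurableSpace X] {μ : Measure Ω}
    [IsProbabilityMeasure μ] {g h : Ω → X} (hg : AEMeasurable g μ) (hh : AEMeasurable h μ)
    {L : NNReal} {f : X → ℝ} (hf : LipschitzWith L f) (hfh : Integrable (fun ω => f (h ω)) μ)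
    {δ : ℝ} (hδ : ∀ᵐ ω ∂μ, dist (g ω) (h ω) ≤ δ) :
    |∫ x, f x ∂μ.map g - ∫ x, f x ∂μ.map h| ≤ L * δ := by
  have hfm : Measurable f := hf.continuous.measurable
  have hclose : ∀ᵐ ω ∂μ, ‖f (g ω) - f (h ω)‖ ≤ L * δ := hδ.mono fun ω hω =>
    (hf.dist_le_mul _ _).trans (mul_le_mul_of_nonneg_left hω L.coe_nonneg)
  have hdiff : Integrable (fun ω => f (g ω) - f (h ω)) μ := .of_bound
    ((hfm.comp_aemeasurable hg).sub (hfm.comp_aemeasurable hh)).aestronglyMeasurable _ hclose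
  have hfg : Integrable (fun ω => f (g ω)) μ := by
    simpa only [Pi.add_def, sub_add_cancel] using hdiff.add hfh
  rw [integral_map hg hfm.aestronglyMeasurable, integral_map hh hfm.aestronglyMeasurable,
    ← integral_sub hfg hfh, ← Real.norm_eq_abs]
  simpa using norm_integral_le_of_norm_le_const hclose

lemma integrable_comp_of_forall_mem_isCompact {Ω X : Type*} [MeasurableSpace Ω]
    [TopologicalSpace X] [MeasurableSpace X] [OpensMeasurableSpace X] {μ : Measure Ω}
    [IsFiniteMeasure μ] {g : Ω → X} (hg : AEMeasurable g μ) {K : Set X} (hK : IsCompact K)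
    (hgK : ∀ ω, g ω ∈ K) {f : X → ℝ} (hf : Continuous f) : Integrable (fun ω => f (g ω)) μ := by
  obtain ⟨M, hM⟩ := hK.exists_bound_of_continuousOn hf.continuousOn
  exact .of_bound (hf.measurable.comp_aemeasurable hg).aestronglyMeasurable M <|
    Eventually.of_forall fun ω => hM _ (hgK ω)

end Measures

section TransferOperator

variable {Λ X : Type*} [MeasurableSpace Λ] [MeasurableSpace X] {w : Λ → X → X}

/-- The transfer operator `T_p`, on arbitrary measures: `T_p μ` is the law of `w_λ x` for
independent `λ` and `x` with laws `p` and `μ`. -/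
noncomputable def transferOperator (w : Λ → X → X) (p : Measure Λ) (μ : Measure X) : Measure X :=
  (p.prod μ).map fun q => w q.1 q.2

lemma transferOperator_apply (hw : Measurable fun q : Λ × X => w q.1 q.2) (p : Measure Λ)
    (μ : Measure X) [SFinite μ] {B : Set X} (hB : MeasurableSet B) :
    transferOperator w p μ B = ∫⁻ l, μ (w l ⁻¹' B) ∂p := by
  rw [transferOperator, Measure.map_apply hw hB, Measure.prod_apply (hw hB)]
  rfl

/-- The law on the code space `ℕ → Λ` of a sequence of independent symbols with law `p`. -/
noncomputable abbrev codeMeasure (p : Measure Λ) [IsProbabilityMeasure p] : Measure (ℕ → Λ) :=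
  Measure.infinitePi fun _ => p

variable (p : Measure Λ) [IsProbabilityMeasure p]

lemma measurePreserving_seqComp (hw : Measurable fun q : Λ × X => w q.1 q.2)
    (μ : Measure X) [SFinite μ] (n : ℕ) :
    MeasurePreserving (fun q : (ℕ → Λ) × X => seqComp w q.1 n q.2)
      ((codeMeasure p).prod μ) ((transferOperator w p)^[n] μ) := by
  induction n with
  | zero => exact measurePreserving_snd
  | succ n ih =>
    have : SFinite ((transferOperator w p)^[n] μ) := ih.map_eq ▸ inferInstance
    have hsplit : MeasurePreserving
        (fun q : (ℕ → Λ) × X => (q.1 0, fun k => q.1 (k + 1), q.2))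
        ((codeMeasure p).prod μ) (p.prod ((codeMeasure p).prod μ)) :=
      (measurePreserving_prodAssoc p (codeMeasure p) μ).comp
        ((measurePreserving_head_tail_infinitePi fun _ => p).prod (.id μ))
    rw [Function.iterate_succ_apply']
    simp only [seqComp_succ']
    exact (hw.measurePreserving _).comp (((MeasurePreserving.id p).prod ih).comp hsplit)

lemma measurePreserving_comp_fst_codeMeasure (μ : Measure X) [IsProbabilityMeasure μ]
    {π : (ℕ → Λ) → X} (hπm : Measurable π) :
    MeasurePreserving (fun q : (ℕ → Λ) × X => π q.1) ((codeMeasure p).prod μ)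
      ((codeMeasure p).map π) :=
  (hπm.measurePreserving _).comp measurePreserving_fst

lemma transferOperator_map_codeMeasure (hw : Measurable fun q : Λ × X => w q.1 q.2)
    {π : (ℕ → Λ) → X} (hπm : Measurable π)
    (hπ : ∀ σ, π σ = w (σ 0) (π fun k => σ (k + 1))) :
    transferOperator w p ((codeMeasure p).map π) = (codeMeasure p).map π := by
  have hpush : MeasurePreserving (fun σ : ℕ → Λ => w (σ 0) (π fun k => σ (k + 1)))
      (codeMeasure p) (transferOperator w p ((codeMeasure p).map π)) :=
    (hw.measurePreserving _).comp <| ((MeasurePreserving.id p).prod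
      (hπm.measurePreserving _)).comp (measurePreserving_head_tail_infinitePi fun _ => p)
  simpa only [← hπ] using hpush.map_eq.symm

end TransferOperator

namespace IsCodingMap

variable {Λ X : Type*} [MeasurableSpace Λ] [MetricSpace X] [MeasurableSpace X] [BorelSpace X]
  {w : Λ → X → X} {π : (ℕ → Λ) → X} (p : Measure Λ) [IsProbabilityMeasure p] {μ : Measure X}
  [IsProbabilityMeasure μ]

lemma tendsto_integral_iterate_transferOperator (hπ : IsCodingMap w π)
    (hw : Measurable fun q : Λ × X => w q.1 q.2) (hπm : Measurable π)
    (f : BoundedContinuousFunction X ℝ) :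
    Tendsto (fun n => ∫ x, f x ∂(transferOperator w p)^[n] μ) atTop
      (𝓝 (∫ x, f x ∂(codeMeasure p).map π)) := by
  have hfm : Measurable f := f.continuous.measurable
  have hwn := measurable_seqComp hw
  rw [← (measurePreserving_comp_fst_codeMeasure p μ hπm).map_eq,
    integral_map (by fun_prop) hfm.aestronglyMeasurable]
  simp only [← (measurePreserving_seqComp p hw μ _).map_eq,
    integral_map (hwn _).aemeasurable hfm.aestronglyMeasurable]
  exact tendsto_integral_of_dominated_convergence (fun _ => ‖f‖)
    (fun n => (hfm.comp (hwn n)).aestronglyMeasurable) (integrable_const _)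
    (fun n => Eventually.of_forall fun q => f.norm_coe_le_norm _)
    (Eventually.of_forall fun q => (f.continuous.tendsto _).comp (hπ.tendsto_seqComp q.1 q.2))

lemma eq_map_codeMeasure_of_isFixedPt (hπ : IsCodingMap w π)
    (hw : Measurable fun q : Λ × X => w q.1 q.2) (hπm : Measurable π)
    (hμ : Function.IsFixedPt (transferOperator w p) μ) : μ = (codeMeasure p).map π := by
  have := Measure.isProbabilityMeasure_map hπm.aemeasurable (μ := codeMeasure p)
  refine ext_of_forall_integral_eq_of_IsFiniteMeasure fun f => ?_
  have hlim := hπ.tendsto_integral_iterate_transferOperator p hw hπm (μ := μ) f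
  simp only [(hμ.iterate _).eq] at hlim
  exact tendsto_nhds_unique tendsto_const_nhds hlim

lemma abs_integral_iterate_transferOperator_sub_le (hπ : IsCodingMap w π)
    (hw : Measurable fun q : Λ × X => w q.1 q.2) (hπm : Measurable π) {C : Set X}
    (hC : Bornology.IsBounded C) (hμC : ∀ᵐ x ∂μ, x ∈ C) {ε : ℝ} (hε : 0 < ε) :
    ∃ N : ℕ, ∀ n ≥ N, ∀ (L : NNReal) (f : X → ℝ), LipschitzWith L f →
      Integrable f ((codeMeasure p).map π) →
        |∫ x, f x ∂(transferOperator w p)^[n] μ - ∫ x, f x ∂(codeMeasure p).map π| ≤ L * ε := by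
  obtain ⟨N, hN⟩ := hπ C hC ε hε
  refine ⟨N, fun n hn L f hf hint => ?_⟩
  have hseq := measurePreserving_seqComp p hw μ n
  have hfst := measurePreserving_comp_fst_codeMeasure p μ hπm
  have hclose : ∀ᵐ q ∂(codeMeasure p).prod μ, dist (seqComp w q.1 n q.2) (π q.1) ≤ ε := by
    filter_upwards [Measure.quasiMeasurePreserving_snd.ae hμC] with q hq
    exact (hN n hn q.1 q.2 hq).le
  rw [← hseq.map_eq, ← hfst.map_eq]
  exact abs_integral_map_sub_integral_map_le hseq.aemeasurable hfst.aemeasurable hf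
    (hfst.integrable_comp_of_integrable hint) hclose

end IsCodingMap

theorem stmt_17_general {Λ X : Type*} [TopologicalSpace Λ] [SecondCountableTopology Λ]
    [MeasurableSpace Λ] [OpensMeasurableSpace Λ] [MetricSpace X] [MeasurableSpace X] [BorelSpace X]
    (w : Λ → X → X) (hw : Continuous fun p : Λ × X => w p.1 p.2) (hcontr : ContractsBoundedSets w)
    (K : Set X) (hKne : K.Nonempty) (hKc : IsCompact K) (hKinv : HBset w K = K)
    (p : Measure Λ) [IsProbabilityMeasure p]
    (T : ProbabilityMeasure X → ProbabilityMeasure X)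
    (hT : ∀ (μ : ProbabilityMeasure X) (B : Set X), MeasurableSet B →
      (T μ : Measure X) B = ∫⁻ l, (μ : Measure X) ((fun x => w l x) ⁻¹' B) ∂p) :
    ∃ ν : ProbabilityMeasure X,
      T ν = ν ∧ measSupport (ν : Measure X) ⊆ K ∧
      (∀ ν' : ProbabilityMeasure X, T ν' = ν' → ν' = ν) ∧
      (p.IsOpenPosMeasure → measSupport (ν : Measure X) = K) ∧
      (∀ μ : ProbabilityMeasure X,
        (∃ C : Set X, Bornology.IsBounded C ∧ ∀ᵐ x ∂(μ : Measure X), x ∈ C) →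
        ∀ ε > (0 : ℝ), ∃ N : ℕ, ∀ n ≥ N, ∀ f : X → ℝ, LipschitzWith 1 f →
          |(∫ y, f y ∂((T^[n] μ : ProbabilityMeasure X) : Measure X)) -
              ∫ y, f y ∂(ν : Measure X)| < ε) := by
  have : Nonempty X := hKne.to_type
  have hwm : Measurable fun q : Λ × X => w q.1 q.2 := hw.measurable
  have hTp : Function.Semiconj ProbabilityMeasure.toMeasure T (transferOperator w p) := fun μ =>
    Measure.ext fun B hB => (hT μ B hB).trans (transferOperator_apply hwm p μ hB).symm
  obtain ⟨π, hπ⟩ := hcontr.exists_isCodingMap hKne hKc.isBounded hKc.isComplete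
    (mapsTo_of_HBset_subset hKinv.subset)
  have hπc : Continuous π := hπ.continuous hw
  have hrange : range π = K := hπ.range_eq hKne hKc.isBounded hKc.isClosed hKinv
  have hπK : ∀ σ, π σ ∈ K := fun σ => hrange ▸ mem_range_self σ
  have hπm : Measurable π := hπc.measurable
  let ν : ProbabilityMeasure X :=
    ⟨(codeMeasure p).map π, Measure.isProbabilityMeasure_map hπm.aemeasurable⟩
  have hsupp : measSupport (ν : Measure X) ⊆ K := by
    rw [measSupport_eq_support]
    exact Measure.support_subset_of_isClosed hKc.isClosed <|
      (ae_map_iff hπm.aemeasurable hKc.isClosed.measurableSet).2 (Eventually.of_forall hπK)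
  refine ⟨ν, Subtype.ext ?_, hsupp, fun ν' hν' => Subtype.ext ?_, fun hp => ?_, ?_⟩
  · exact (hTp ν).trans <| transferOperator_map_codeMeasure p hwm hπm <|
      hπ.eq_apply_shift fun l => hw.comp (.prodMk_right l)
  · exact hπ.eq_map_codeMeasure_of_isFixedPt p (μ := (ν' : Measure X)) hwm hπm <|
      (hTp ν').symm.trans (congrArg _ hν')
  · have := isOpenPosMeasure_infinitePi fun _ : ℕ => p
    refine hsupp.antisymm ?_
    rw [measSupport_eq_support, ← hrange]
    exact range_subset_support_map hπc
  · rintro μ ⟨C, hC, hμC⟩ ε hε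
    obtain ⟨N, hN⟩ := hπ.abs_integral_iterate_transferOperator_sub_le p hwm hπm hC hμC (half_pos hε)
    refine ⟨N, fun n hn f hf => ?_⟩
    have hint : Integrable f ν :=
      (integrable_map_measure hf.continuous.measurable.aestronglyMeasurable hπm.aemeasurable).2
        (integrable_comp_of_forall_mem_isCompact hπm.aemeasurable hKc hπK hf.continuous)
    rw [(hTp.iterate_right n) μ]
    exact (hN n hn 1 f hf hint).trans_lt (by simpa using half_lt_self hε)

/-- Invariant measures for weakly* hyperbolic IFS on complete, suitably
chainable metric spaces: existence and uniqueness of an invariant probability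
measure supported in the attractor `K`, equality of the support with `K` when
`p` charges every nonempty open set, and convergence, in the Hutchinson metric,
of the transfer-operator iterates of every compactly supported probability
measure. -/
theorem stmt_17 {Λ X : Type*} [MetricSpace Λ] [CompactSpace Λ]
    [MeasurableSpace Λ] [BorelSpace Λ]
    [MetricSpace X] [CompleteSpace X] [Nonempty X] [MeasurableSpace X] [BorelSpace X]
    -- `X` is uniformly ε-chainable on balls, for every ε > 0
    (hball : ∀ ε > (0 : ℝ), ∀ (a : X) (r : ℝ), ∃ k : ℕ,
      ∀ x ∈ ball a r, ∀ y ∈ ball a r, ∃ n ≤ k, ∃ c : ℕ → X,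
        c 0 = x ∧ c n = y ∧ ∀ i < n, dist (c i) (c (i + 1)) < ε)
    -- the hyperspace of nonempty compact subsets of `X` is ε-chainable, for every ε > 0
    (hchain : ∀ ε > (0 : ℝ), ∀ A B : NonemptyCompacts X,
      ∃ (n : ℕ) (c : ℕ → NonemptyCompacts X), c 0 = A ∧ c n = B ∧
        ∀ i < n, dist (c i) (c (i + 1)) < ε)
    (w : Λ → X → X) (hw : Continuous fun p : Λ × X => w p.1 p.2)
    -- `w` is weakly* hyperbolic
    (hyp : ∃ η > (0 : ℝ), ∀ ε > (0 : ℝ), ∃ n₀ : ℕ, ∀ n ≥ n₀, ∀ σ : ℕ → Λ, ∀ x y : X,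
      dist x y < η → dist (seqComp w σ n x) (seqComp w σ n y) < ε)
    -- `K` is the global attractor of `w`
    (K : Set X) (hKne : K.Nonempty) (hKc : IsCompact K) (hKinv : HBset w K = K)
    (hKattr : ∀ B : Set X, B.Nonempty → IsCompact B →
      Tendsto (fun n => hausdorffDist ((HBset w)^[n] B) K) atTop (𝓝 0))
    (p : Measure Λ) [IsProbabilityMeasure p]
    (T : ProbabilityMeasure X → ProbabilityMeasure X)
    (hT : ∀ (μ : ProbabilityMeasure X) (B : Set X), MeasurableSet B →
      (T μ : Measure X) B = ∫⁻ l, (μ : Measure X) ((fun x => w l x) ⁻¹' B) ∂p) :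
    ∃ ν : ProbabilityMeasure X,
      (T ν = ν ∧ measSupport (ν : Measure X) ⊆ K) ∧
      (∀ ν' : ProbabilityMeasure X,
        T ν' = ν' → measSupport (ν' : Measure X) ⊆ K → ν' = ν) ∧
      ((∀ U : Set Λ, IsOpen U → U.Nonempty → 0 < p U) →
        measSupport (ν : Measure X) = K) ∧
      (∀ μ : ProbabilityMeasure X,
        (∃ C : Set X, IsCompact C ∧ (μ : Measure X) C = 1) →
        ∀ ε > (0 : ℝ), ∃ N : ℕ, ∀ n ≥ N, ∀ f : X → ℝ, LipschitzWith 1 f →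
          |(∫ y, f y ∂((T^[n] μ : ProbabilityMeasure X) : Measure X)) -
              ∫ y, f y ∂(ν : Measure X)| < ε) := by
  obtain ⟨η, hη, hscale⟩ := hyp
  have hcontr : ContractsBoundedSets w := ContractsAtScale.contractsBoundedSets hscale (hball η hη)
  obtain ⟨ν, hfix, hsupp, huniq, hfull, hconv⟩ :=
    stmt_17_general w hw hcontr K hKne hKc hKinv p T hT
  exact ⟨ν, ⟨hfix, hsupp⟩, fun ν' hν' _ => huniq ν' hν',
    fun hp => hfull ⟨fun U hU hne => (hp U hU hne).ne'⟩,
    fun μ ⟨C, hC, hμC⟩ => hconv μ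
      ⟨C, hC.isBounded, (mem_ae_iff_prob_eq_one hC.isClosed.measurableSet).2 hμC⟩⟩
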